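/- Subtree support of consensus-propagation messages on a tree: every message P_{i,j}[l→l'] lies in the linear span of the set {u_{i'}[l''] : 0 ≤ i' ≤ i, l'' ∈ C(l,l')}; in particular, P_{i,j}[l→l'] involves no input vector attached to l' or to any vertex separated from l by the edge {l,l'}. -/

import Mathlib

open SimpleGraph

/-!
The sets `C(l, l')` are nested along the recursion: for `m ∈ N(l) \ {l'}`, a walk to `m` that
avoids the edge `{m, l}` cannot visit `l`, since `{m, l}` is a bridge; it therefore avoids `{l, l'}`
as well and extends by the edge `{m, l}` to `l`. Hence each term of the update defining the message
`l → l'` already lies in the span of the inputs on `C(l, l')`.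
-/

namespace ConsensusPropagation

variable {𝓛 : Type*} {G : SimpleGraph 𝓛}

/-- The set `C(l, l')` of vertices on the side of `l` of the edge `{l, l'}`, i.e. the connected
component of `l` once that edge is deleted. -/
def branch (G : SimpleGraph 𝓛) (l l' : 𝓛) : Set 𝓛 :=
  {x | (G.deleteEdges {s(l, l')}).Reachable x l}

theorem self_mem_branch (l l' : 𝓛) : l ∈ branch G l l' :=
  Reachable.refl l

theorem branch_subset_branch_of_isBridge {l l' m : 𝓛} (hbridge : G.IsBridge s(m, l))
    (hm : G.Adj m l) (hne : m ≠ l') : branch G m l ⊆ branch G l l' := by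
  classical
  rintro x ⟨p⟩
  have hl : l ∉ p.support := fun h => isBridge_iff.1 hbridge (p.dropUntil l h).reachable.symm
  have hedges : ∀ e ∈ p.edges, e ∈ (G.deleteEdges {s(l, l')}).edgeSet := by
    intro e he
    rw [edgeSet_deleteEdges]
    refine ⟨edgeSet_mono (deleteEdges_le _) (p.edges_subset_edgeSet he), ?_⟩
    rintro rfl
    exact hl (p.fst_mem_support_of_mem_edges he)
  have hml : (G.deleteEdges {s(l, l')}).Adj m l := by
    simp [deleteEdges_adj, hm, hm.ne, hne]
  exact (p.transfer _ hedges).reachable.trans hml.reachable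

section InputSpan

variable (R : Type*) {V : Type*} [Semiring R] [AddCommMonoid V] [Module R V]

/-- The span of the inputs received by the vertices of `S` in the rounds `0, …, i`. -/
def inputSpan (u : ℕ → 𝓛 → V) (i : ℕ) (S : Set 𝓛) : Submodule R V :=
  Submodule.span R {v | ∃ i' ≤ i, ∃ x ∈ S, v = u i' x}

variable {u : ℕ → 𝓛 → V} {i k : ℕ} {S T : Set 𝓛}

theorem input_mem_inputSpan {x : 𝓛} (hx : x ∈ S) : u i x ∈ inputSpan R u i S :=
  Submodule.subset_span ⟨i, le_rfl, x, hx, rfl⟩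

theorem inputSpan_mono (hik : i ≤ k) (hST : S ⊆ T) : inputSpan R u i S ≤ inputSpan R u k T :=
  Submodule.span_mono fun _ ⟨i', hi', x, hx, hv⟩ => ⟨i', hi'.trans hik, x, hST hx, hv⟩

end InputSpan

theorem message_mem_of_initial_mem [DecidableEq 𝓛] [G.LocallyFinite]
    {V : Type*} [AddCommMonoid V] {w : 𝓛 → V} {J : ℕ} {p : ℕ → 𝓛 → 𝓛 → V}
    {W : 𝓛 → 𝓛 → AddSubmonoid V}
    (hw : ∀ l l', G.Adj l l' → w l ∈ W l l')
    (hW : ∀ l l' m, G.Adj l l' → G.Adj m l → m ≠ l' → W m l ≤ W l l')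
    (hinit : ∀ l l', G.Adj l l' → p 0 l l' ∈ W l l')
    (hstep : ∀ j < J, ∀ l l', G.Adj l l' →
      p (j + 1) l l' = w l + ∑ m ∈ (G.neighborFinset l).erase l', p j m l)
    {j : ℕ} (hj : j ≤ J) {l l' : 𝓛} (hadj : G.Adj l l') : p j l l' ∈ W l l' := by
  induction j generalizing l l' with
  | zero => exact hinit l l' hadj
  | succ j ih =>
    rw [hstep j hj l l' hadj]
    refine add_mem (hw l l' hadj) (sum_mem fun m hm => ?_)
    obtain ⟨hne, hlm⟩ : m ≠ l' ∧ G.Adj l m := by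
      simpa only [Finset.mem_erase, mem_neighborFinset] using hm
    exact hW l l' m hadj hlm.symm hne (ih (Nat.le_of_succ_le hj) hlm.symm)

end ConsensusPropagation

open ConsensusPropagation

theorem consensus_message_subtree_support_general
    {𝓛 : Type*} [DecidableEq 𝓛] {G : SimpleGraph 𝓛} [G.LocallyFinite] (hG : G.IsAcyclic)
    (R : Type*) {V : Type*} [Semiring R] [AddCommMonoid V] [Module R V]
    {u : ℕ → 𝓛 → V} {J : ℕ} {P : ℕ → ℕ → 𝓛 → 𝓛 → V}
    (hP00 : ∀ l l', G.Adj l l' → P 0 0 l l' = 0)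
    (hPinit : ∀ i l l', G.Adj l l' → P (i + 1) 0 l l' = P i J l l')
    (hPstep : ∀ i j, j < J → ∀ l l', G.Adj l l' →
      P i (j + 1) l l' = u i l + ∑ m ∈ (G.neighborFinset l).erase l', P i j m l)
    (i : ℕ) {j : ℕ} (hj : j ≤ J) {l l' : 𝓛} (hadj : G.Adj l l') :
    P i j l l' ∈ inputSpan R u i (branch G l l') := by
  have hround (i : ℕ)
      (hinit : ∀ l l', G.Adj l l' → P i 0 l l' ∈ inputSpan R u i (branch G l l'))
      {j : ℕ} (hj : j ≤ J) {l l' : 𝓛} (hadj : G.Adj l l') :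
      P i j l l' ∈ inputSpan R u i (branch G l l') :=
    message_mem_of_initial_mem (W := fun l l' => (inputSpan R u i (branch G l l')).toAddSubmonoid)
      (fun l l' _ => input_mem_inputSpan R (self_mem_branch l l'))
      (fun _ _ _ _ hm hne => inputSpan_mono R le_rfl <|
        branch_subset_branch_of_isBridge (isAcyclic_iff_forall_adj_isBridge.1 hG hm) hm hne)
      hinit (hPstep i) hj hadj
  induction i generalizing j l l' with
  | zero => exact hround 0 (fun l l' h => hP00 l l' h ▸ zero_mem _) hj hadj
  | succ i ih =>
    refine hround (i + 1) (fun l l' h => ?_) hj hadj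
    rw [hPinit i l l' h]
    exact inputSpan_mono R i.le_succ subset_rfl (ih le_rfl h)

/-- Subtree support of consensus-propagation messages on a tree: every
message `P_{i,j}[l→l']` lies in the linear span of the input vectors
`{u_{i'}[l''] : i' ≤ i, l'' ∈ C(l,l')}`, where `C(l,l')` is the connected component of
`l` in the graph obtained from `G` by deleting the edge `{l,l'}`.  In particular, the
message involves no input vector attached to `l'` or to any vertex separated from `l` by
the edge `{l,l'}`. -/
theorem consensus_message_subtree_support
    {𝓛 : Type*} [Fintype 𝓛] [DecidableEq 𝓛] (G : SimpleGraph 𝓛) [DecidableRel G.Adj]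
    (hG : G.IsTree)
    {V : Type*} [AddCommGroup V] [Module ℝ V]
    (u : ℕ → 𝓛 → V)
    (J : ℕ) (P : ℕ → ℕ → 𝓛 → 𝓛 → V)
    (hP00 : ∀ l l' : 𝓛, G.Adj l l' → P 0 0 l l' = 0)
    (hPinit : ∀ (i : ℕ) (l l' : 𝓛), G.Adj l l' → P (i + 1) 0 l l' = P i J l l')
    (hPstep : ∀ (i j : ℕ), j < J → ∀ l l' : 𝓛, G.Adj l l' →
      P i (j + 1) l l' = u i l + ∑ l'' ∈ (G.neighborFinset l).erase l', P i j l'' l)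
    (i j : ℕ) (hj : j ≤ J) (l l' : 𝓛) (hadj : G.Adj l l') :
    P i j l l' ∈ Submodule.span ℝ
      {v : V | ∃ i' ≤ i, ∃ l'' : 𝓛,
        (G.deleteEdges {s(l, l')}).Reachable l'' l ∧ v = u i' l''} :=
  consensus_message_subtree_support_general hG.isAcyclic ℝ hP00 hPinit hPstep i hj hadj
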